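/- arXiv:2212.05127 — 7 statements merged into one kernel-verified Lean document; each statement's English description precedes it below -/
import Mathlib

section
/- The function t ↦ ∫_0^X ½ u(t,x)² dx is constant on ℝ; that is, solutions of the linear Korteweg–de Vries equation conserve momentum. -/
open intervalIntegral

/-- Space part: the flux integrates to zero over a period. -/
lemma space_part (X : ℝ) (f : ℝ → ℝ) (hf : ContDiff ℝ (⊤ : ℕ∞) f)
    (hper : ∀ x, f (x + X) = f x) :
    ∫ x in (0:ℝ)..X, f x * (deriv f x + deriv (deriv (deriv f)) x) = 0 := by
  have h1 : ContDiff ℝ (⊤ : ℕ∞) (deriv f) := (contDiff_infty_iff_deriv.1 hf).2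
  have h2 : ContDiff ℝ (⊤ : ℕ∞) (deriv (deriv f)) := (contDiff_infty_iff_deriv.1 h1).2
  have h3 : ContDiff ℝ (⊤ : ℕ∞) (deriv (deriv (deriv f))) := (contDiff_infty_iff_deriv.1 h2).2
  have hd : ∀ g : ℝ → ℝ, (∀ x, g (x + X) = g x) → ∀ x, deriv g (x + X) = deriv g x := by
    intro g hg x
    rw [← deriv_comp_add_const]
    congr 1
    funext y
    exact hg y
  have p1 := hd f hper
  have p2 := hd _ p1
  have key : ∀ x ∈ Set.uIcc (0:ℝ) X, HasDerivAt
      (fun x => f x * deriv (deriv f) x - (1/2) * (deriv f x)^2 + (1/2) * (f x)^2)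
      (f x * (deriv f x + deriv (deriv (deriv f)) x)) x := by
    intro x _
    have d0 := ((contDiff_infty_iff_deriv.1 hf).1 x).hasDerivAt
    have d1 := ((contDiff_infty_iff_deriv.1 h1).1 x).hasDerivAt
    have d2 := ((contDiff_infty_iff_deriv.1 h2).1 x).hasDerivAt
    have := ((d0.mul d2).sub ((d1.pow 2).const_mul (1/2))).add ((d0.pow 2).const_mul (1/2))
    refine this.congr_deriv ?_
    simp
    ring
  rw [integral_eq_sub_of_hasDerivAt key]
  · have a0 := hper 0
    have a1 := p1 0
    have a2 := p2 0
    rw [zero_add] at a0 a1 a2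
    simp only [a0, a1, a2, sub_self]
  · exact (hf.continuous.mul (h1.continuous.add h3.continuous)).intervalIntegrable _ _

/-- Solutions of the linear KdV equation `u_t + u_x + u_xxx = 0`, smooth and
`X`-periodic in space, conserve momentum: `t ↦ ∫_0^X ½ u(t,x)² dx` is constant. -/
theorem lkdv_momentum_conservation
    (X : ℝ) (hX : 0 < X) (u : ℝ × ℝ → ℝ)
    (hu : ContDiff ℝ (⊤ : ℕ∞) u)
    (hper : ∀ t x : ℝ, u (t, x + X) = u (t, x))
    (hpde : ∀ t x : ℝ,
      deriv (fun s => u (s, x)) t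
        + deriv (fun y => u (t, y)) x
        + deriv (fun y => deriv (fun y' => deriv (fun y'' => u (t, y'')) y') y) x = 0) :
    ∀ t₁ t₂ : ℝ,
      (∫ x in (0:ℝ)..X, (1/2) * (u (t₁, x))^2)
        = ∫ x in (0:ℝ)..X, (1/2) * (u (t₂, x))^2 := by
  have hd : Differentiable ℝ u := hu.differentiable (by simp)
  have hut : ∀ t x : ℝ, HasDerivAt (fun s => u (s, x)) (fderiv ℝ u (t, x) (1, 0)) t := by
    intro t x
    exact (hd (t, x)).hasFDerivAt.comp_hasDerivAt t
      ((hasDerivAt_id t).prodMk (hasDerivAt_const t x))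
  have hc : Continuous (fun p : ℝ × ℝ => u p * fderiv ℝ u p (1, 0)) :=
    hu.continuous.mul ((hu.continuous_fderiv (by simp)).clm_apply continuous_const)
  have main : ∀ t : ℝ, HasDerivAt
      (fun t => ∫ x in (0:ℝ)..X, (1/2) * (u (t, x))^2) 0 t := by
    intro t
    obtain ⟨C, hC⟩ := ((isCompact_Icc (a := t - 1) (b := t + 1)).prod
      (isCompact_Icc (a := (0:ℝ)) (b := X))).exists_bound_of_continuousOn hc.continuousOn
    have hcu : ∀ s : ℝ, Continuous (fun x : ℝ => (1/2) * (u (s, x))^2) := by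
      intro s
      have := hu.continuous
      fun_prop
    have hcv : Continuous (fun x : ℝ => u (t, x) * fderiv ℝ u (t, x) (1, 0)) :=
      hc.comp (by fun_prop : Continuous (fun x : ℝ => (t, x)))
    have := (hasDerivAt_integral_of_dominated_loc_of_deriv_le (μ := MeasureTheory.volume)
      (a := (0:ℝ)) (b := X) (𝕜 := ℝ)
      (F := fun t x => (1/2) * (u (t, x))^2)
      (F' := fun t x => u (t, x) * fderiv ℝ u (t, x) (1, 0)) (x₀ := t)
      (s := Set.Icc (t - 1) (t + 1)) (bound := fun _ => C)
      (Icc_mem_nhds (by linarith) (by linarith))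
      (Filter.Eventually.of_forall fun s => (hcu s).aestronglyMeasurable)
      ((hcu t).intervalIntegrable _ _)
      hcv.aestronglyMeasurable
      (Filter.Eventually.of_forall fun x hx s hs => by
        rw [Set.uIoc_of_le hX.le] at hx
        exact hC (s, x) ⟨hs, hx.1.le, hx.2⟩)
      intervalIntegrable_const
      (Filter.Eventually.of_forall fun x _ s _ => by
        refine (((hut s x).pow 2).const_mul (1/2)).congr_deriv ?_
        simp
        ring)).2
    refine this.congr_deriv ?_
    have hf : ContDiff ℝ (⊤ : ℕ∞) (fun y => u (t, y)) :=
      hu.comp (contDiff_const.prodMk contDiff_id)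
    have hs := space_part X (fun y => u (t, y)) hf (hper t)
    rw [← neg_eq_zero, ← intervalIntegral.integral_neg]
    refine Eq.trans ?_ hs
    congr 1
    funext x
    have h := hpde t x
    rw [(hut t x).deriv] at h
    change _ + _ + deriv (deriv (deriv (fun y => u (t, y)))) x = 0 at h
    linear_combination (-u (t, x)) * h
  intro t₁ t₂
  exact is_const_of_deriv_eq_zero (fun t => (main t).differentiableAt)
    (fun t => (main t).deriv) t₁ t₂
end

section
/- If additionally e ∈ H satisfies G e = 0, then ⟨e, u⁺⟩ = ⟨e, u⟩; that is, the Crank–Nicolson discretisation of the linear KdV system conserves the discrete mass functional determined by any element annihilated by G. -/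
open RealInnerProductSpace

/-- The Crank–Nicolson discretisation of the first-order-system form of the
linear KdV equation conserves the discrete mass functional determined by any
element annihilated by the skew-adjoint operator `G`.  Here `u'`, `w'` denote
the new iterates `u⁺`, `w⁺`. -/
theorem cn_lkdv_mass
    {H : Type*} [NormedAddCommGroup H] [InnerProductSpace ℝ H]
    (G : H →ₗ[ℝ] H)
    (hG : ∀ x y : H, ⟪G x, y⟫ = -⟪x, G y⟫)
    (τ : ℝ) (u u' v w w' : H)
    (h1 : u' - u + τ • G v = 0)
    (h2 : v = (1/2 : ℝ) • (u + u') + G ((1/2 : ℝ) • (w + w')))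
    (h3 : w = G u) (h4 : w' = G u')
    (e : H) (he : G e = 0) :
    ⟪e, u'⟫ = ⟪e, u⟫ := by
  have h := hG e v
  rw [he, inner_zero_left] at h
  have h5 := congrArg (fun x : H => inner ℝ e x) h1
  simp only [inner_add_right, inner_sub_right, inner_smul_right, inner_zero_right] at h5
  have h6 : inner ℝ e (G v) = 0 := by linarith
  rw [h6] at h5
  linarith
end

section
/- ‖u⁺‖ = ‖u‖; that is, the Crank–Nicolson discretisation of the linear KdV system exactly conserves the discrete momentum ½‖u‖². -/
open RealInnerProductSpace

/-- The Crank–Nicolson discretisation of the first-order-system form of the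
linear KdV equation exactly conserves the discrete momentum `½‖u‖²`:
`‖u⁺‖ = ‖u‖`.  Here `u'`, `w'` denote the new iterates `u⁺`, `w⁺`. -/
theorem cn_lkdv_momentum
    {H : Type*} [NormedAddCommGroup H] [InnerProductSpace ℝ H]
    (G : H →ₗ[ℝ] H)
    (hG : ∀ x y : H, ⟪G x, y⟫ = -⟪x, G y⟫)
    (τ : ℝ) (u u' v w w' : H)
    (h1 : u' - u + τ • G v = 0)
    (h2 : v = (1/2 : ℝ) • (u + u') + G ((1/2 : ℝ) • (w + w')))
    (h3 : w = G u) (h4 : w' = G u') :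
    ‖u'‖ = ‖u‖ := by
  have hz : ∀ x : H, inner ℝ (G x) x = 0 := by
    intro x
    have h := hG x x
    rw [real_inner_comm (G x) x] at h
    rw [real_inner_comm] at h ⊢
    linarith
  have hv : G v = (1/2 : ℝ) • (G (u + u') + G (G (G (u + u')))) := by
    rw [h2, h3, h4]
    simp only [map_add, map_smul, smul_add]
  have h5 : inner ℝ (G v) (u + u') = 0 := by
    rw [hv, real_inner_smul_left, inner_add_left, hz, hG (G (G (u + u'))) (u + u'), hz]
    simp
  have h6 : inner ℝ (u' - u) (u + u') = 0 := by
    rw [eq_neg_of_add_eq_zero_left h1, inner_neg_left, real_inner_smul_left, h5]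
    simp
  rw [inner_sub_left, inner_add_right, inner_add_right, real_inner_self_eq_norm_sq,
    real_inner_self_eq_norm_sq, real_inner_comm u u'] at h6
  rw [← sq_eq_sq₀ (norm_nonneg _) (norm_nonneg _)]
  linarith [real_inner_comm u u']
end

section
/- ‖w⁺‖² − ‖u⁺‖² = ‖w‖² − ‖u‖²; that is, the Crank–Nicolson discretisation of the linear KdV system exactly conserves the discrete energy ½(‖w‖² − ‖u‖²). -/
open RealInnerProductSpace

/-- The Crank–Nicolson discretisation of the first-order-system form of the
linear KdV equation exactly conserves the discrete energy `½(‖w‖² − ‖u‖²)`: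
`‖w⁺‖² − ‖u⁺‖² = ‖w‖² − ‖u‖²`.  Here `u'`, `w'` denote the new iterates. -/
theorem cn_lkdv_energy
    {H : Type*} [NormedAddCommGroup H] [InnerProductSpace ℝ H]
    (G : H →ₗ[ℝ] H)
    (hG : ∀ x y : H, ⟪G x, y⟫ = -⟪x, G y⟫)
    (τ : ℝ) (u u' v w w' : H)
    (h1 : u' - u + τ • G v = 0)
    (h2 : v = (1/2 : ℝ) • (u + u') + G ((1/2 : ℝ) • (w + w')))
    (h3 : w = G u) (h4 : w' = G u') :
    ‖w'‖^2 - ‖u'‖^2 = ‖w‖^2 - ‖u‖^2 := by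
  have hv : ⟪G v, v⟫ = 0 := by
    have h := hG v v
    rw [real_inner_comm (G v) v] at h
    linarith [real_inner_comm (G v) v]
  have e : u' - u = -(τ • G v) := eq_neg_of_add_eq_zero_left h1
  have k : ⟪u' - u, v⟫ = 0 := by
    rw [e, inner_neg_left, real_inner_smul_left, hv]
    simp
  have k2 := hG (u' - u) ((1/2 : ℝ) • (w + w'))
  rw [map_sub, ← h3, ← h4] at k2
  rw [h2, inner_add_right] at k
  have k3 : ⟪u' - u, (1/2 : ℝ) • (u + u')⟫ = (1/2) * (‖u'‖^2 - ‖u‖^2) := by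
    rw [real_inner_smul_right, inner_sub_left, inner_add_right, inner_add_right,
      real_inner_comm u u', real_inner_self_eq_norm_sq, real_inner_self_eq_norm_sq]
    ring
  have k4 : ⟪w' - w, (1/2 : ℝ) • (w + w')⟫ = (1/2) * (‖w'‖^2 - ‖w‖^2) := by
    rw [real_inner_smul_right, inner_sub_left, inner_add_right, inner_add_right,
      real_inner_comm w w', real_inner_self_eq_norm_sq, real_inner_self_eq_norm_sq]
    ring
  linarith
end

section
/- ‖U⁺‖² + c² ‖Ρ⁺‖² = ‖U‖² + c² ‖Ρ‖²; that is, the Crank–Nicolson discretisation of the linear rotating shallow water equations exactly conserves the discrete energy ½(‖U‖² + c²‖Ρ‖²). -/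
open RealInnerProductSpace

/-- The Crank–Nicolson discretisation of the linear rotating shallow water
equations exactly conserves the discrete energy `½(‖U‖² + c²‖Ρ‖²)`:
`‖U⁺‖² + c²‖Ρ⁺‖² = ‖U‖² + c²‖Ρ‖²`.  Here `U'`, `P'` denote the new iterates,
`Dstar` denotes the adjoint `D*`, and `P` denotes the pressure `Ρ`. -/
theorem cn_swe_energy
    {V Q : Type*} [NormedAddCommGroup V] [InnerProductSpace ℝ V]
    [NormedAddCommGroup Q] [InnerProductSpace ℝ Q]
    (D : V →ₗ[ℝ] Q) (Dstar : Q →ₗ[ℝ] V)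
    (hadj : ∀ (ρ : Q) (φ : V), ⟪Dstar ρ, φ⟫ = ⟪ρ, D φ⟫)
    (J : V →ₗ[ℝ] V) (hJ : ∀ φ : V, ⟪J φ, φ⟫ = 0)
    (f c τ : ℝ) (U U' : V) (P P' : Q)
    (h1 : U' - U + (τ * f) • J ((1/2 : ℝ) • (U + U'))
            - (τ * c^2) • Dstar ((1/2 : ℝ) • (P + P')) = 0)
    (h2 : P' - P + τ • D ((1/2 : ℝ) • (U + U')) = 0) :
    ‖U'‖^2 + c^2 * ‖P'‖^2 = ‖U‖^2 + c^2 * ‖P‖^2 := by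
  have key1 : ⟪U' - U, (1/2 : ℝ) • (U + U')⟫ = (1/2) * (‖U'‖^2 - ‖U‖^2) := by
    rw [real_inner_smul_right, inner_sub_left, inner_add_right, inner_add_right,
      real_inner_self_eq_norm_sq, real_inner_self_eq_norm_sq, real_inner_comm U U']
    ring
  have key2 : ⟪P' - P, (1/2 : ℝ) • (P + P')⟫ = (1/2) * (‖P'‖^2 - ‖P‖^2) := by
    rw [real_inner_smul_right, inner_sub_left, inner_add_right, inner_add_right,
      real_inner_self_eq_norm_sq, real_inner_self_eq_norm_sq, real_inner_comm P P']
    ring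
  generalize (1/2 : ℝ) • (U + U') = m at *
  generalize (1/2 : ℝ) • (P + P') = q at *
  have e1 := congrArg (fun x => ⟪x, m⟫) h1
  have e2 := congrArg (fun x => ⟪x, q⟫) h2
  simp only [inner_zero_left] at e1 e2
  rw [inner_sub_left, inner_add_left, real_inner_smul_left, real_inner_smul_left, hJ, hadj,
    key1] at e1
  rw [inner_add_left, real_inner_smul_left, key2, real_inner_comm] at e2
  linear_combination 2 * e1 + 2 * c^2 * e2
end

section
/- For every k ∈ ℕ, ωᵀ (Aᵏ r₀) = 0, and consequently every vector x in the affine Krylov space x₀ + span{r₀, A r₀, A² r₀, …} satisfies ωᵀ x = m. In particular, every iterate of unpreconditioned GMRES with initial guess x₀ exactly preserves the linear invariant ωᵀ x = m. -/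
open Matrix

/-- If `ω` is a left eigenvector of `A` with eigenvalue `γ`, `ωᵀ f = γ m` and
`ωᵀ x₀ = m`, then `ωᵀ Aᵏ r₀ = 0` for every `k`, and consequently every vector
in the affine Krylov space `x₀ + span{r₀, A r₀, A² r₀, …}` satisfies
`ωᵀ x = m`.  In particular, every iterate of unpreconditioned GMRES with
initial guess `x₀` exactly preserves the linear invariant `ωᵀ x = m`. -/
theorem gmres_linear_invariant
    (n : ℕ) (hn : 1 ≤ n)
    (A : Matrix (Fin n) (Fin n) ℝ)
    (ω f x₀ : Fin n → ℝ) (γ m : ℝ)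
    (hω : Aᵀ.mulVec ω = γ • ω)
    (hf : ω ⬝ᵥ f = γ * m)
    (hx₀ : ω ⬝ᵥ x₀ = m)
    (r₀ : Fin n → ℝ) (hr : r₀ = f - A.mulVec x₀) :
    (∀ k : ℕ, ω ⬝ᵥ (A ^ k).mulVec r₀ = 0)
      ∧ (∀ x : Fin n → ℝ,
          x - x₀ ∈ Submodule.span ℝ
            (Set.range fun k : ℕ => (A ^ k).mulVec r₀) →
          ω ⬝ᵥ x = m) := by
  have hA : ∀ v : Fin n → ℝ, ω ⬝ᵥ A.mulVec v = γ * (ω ⬝ᵥ v) := by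
    intro v
    rw [Matrix.dotProduct_mulVec, ← Matrix.mulVec_transpose, hω, smul_dotProduct, smul_eq_mul]
  have h1 : ∀ k : ℕ, ω ⬝ᵥ (A ^ k).mulVec r₀ = 0 := by
    intro k
    induction k with
    | zero => rw [pow_zero, Matrix.one_mulVec, hr, dotProduct_sub, hA, hf, hx₀, sub_self]
    | succ k ih => rw [pow_succ', ← Matrix.mulVec_mulVec, hA, ih, mul_zero]
  refine ⟨h1, fun x hx => ?_⟩
  have h2 : ω ⬝ᵥ (x - x₀) = 0 := by
    generalize x - x₀ = d at hx ⊢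
    induction hx using Submodule.span_induction with
    | mem y hy =>
      obtain ⟨k, rfl⟩ := hy
      exact h1 k
    | zero => exact dotProduct_zero ω
    | add y z _ _ hy hz => rw [dotProduct_add, hy, hz, add_zero]
    | smul a y _ hy => rw [dotProduct_smul, hy, smul_zero]
  rw [dotProduct_sub, hx₀] at h2
  linarith
end

section
/- Suppose the Runge–Kutta coefficients satisfy the symplecticity condition b_i a_{ij} + b_j a_{ji} = b_i b_j for all 1 ≤ i, j ≤ s (as holds for the Gauss–Legendre methods), and suppose M is a symmetric real d × d matrix such that yᵀ M h(t', y) = 0 for all t' ∈ ℝ and y ∈ ℝ^d (so that z ↦ zᵀ M z is an invariant of z' = h(t, z)). Then (z⁺)ᵀ M z⁺ = zᵀ M z; that is, such Runge–Kutta methods exactly preserve all quadratic invariants. -/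
open Matrix

/-- A Runge–Kutta method whose coefficients satisfy the symplecticity
condition `b_i a_{ij} + b_j a_{ji} = b_i b_j` (as do the Gauss–Legendre
methods) exactly preserves all quadratic invariants: if `M` is symmetric and
`yᵀ M h(t', y) = 0` for all `t'`, `y`, then `(z⁺)ᵀ M z⁺ = zᵀ M z`. -/
theorem symplectic_rk_preserves_quadratic_invariants
    (s d : ℕ) (hs : 1 ≤ s) (hd : 1 ≤ d) (τ : ℝ)
    (h : ℝ × (Fin d → ℝ) → Fin d → ℝ)
    (a : Fin s → Fin s → ℝ) (b : Fin s → ℝ) (c : Fin s → ℝ)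
    (t : ℝ) (z : Fin d → ℝ)
    (k : Fin s → Fin d → ℝ)
    (hk : ∀ i : Fin s,
      k i = h (t + c i * τ, z + τ • ∑ j : Fin s, a i j • k j))
    (zp : Fin d → ℝ)
    (hzp : zp = z + τ • ∑ i : Fin s, b i • k i)
    (hsymplectic : ∀ i j : Fin s, b i * a i j + b j * a j i = b i * b j)
    (M : Matrix (Fin d) (Fin d) ℝ) (hM : M.IsSymm)
    (hinv : ∀ (t' : ℝ) (y : Fin d → ℝ), y ⬝ᵥ M.mulVec (h (t', y)) = 0) :
    zp ⬝ᵥ M.mulVec zp = z ⬝ᵥ M.mulVec z := by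
  have hB : ∀ x y : Fin d → ℝ, x ⬝ᵥ M.mulVec y = y ⬝ᵥ M.mulVec x := by
    intro x y
    rw [dotProduct_mulVec, ← mulVec_transpose, hM.eq, dotProduct_comm]
  have h1 : ∀ i, z ⬝ᵥ M.mulVec (k i)
      + τ * ∑ j, a i j * (k j ⬝ᵥ M.mulVec (k i)) = 0 := by
    intro i
    have h2 := hinv (t + c i * τ) (z + τ • ∑ j : Fin s, a i j • k j)
    rw [← hk i] at h2
    simpa only [add_dotProduct, smul_dotProduct, sum_dotProduct, smul_eq_mul] using h2
  have h3 : ∀ x : Fin d → ℝ, x ⬝ᵥ M.mulVec (∑ i, b i • k i)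
      = ∑ i, b i * (x ⬝ᵥ M.mulVec (k i)) := by
    intro x
    rw [hB, sum_dotProduct]
    refine Finset.sum_congr rfl fun i _ => ?_
    rw [smul_dotProduct, smul_eq_mul, hB]
  have h4 : (∑ i, b i • k i) ⬝ᵥ M.mulVec (∑ i, b i • k i)
      = 2 * ∑ i, b i * ∑ j, a i j * (k j ⬝ᵥ M.mulVec (k i)) := by
    rw [h3]
    have h5 : ∑ i, b i * ∑ j, a i j * (k j ⬝ᵥ M.mulVec (k i))
        = ∑ i, ∑ j, b i * a i j * (k j ⬝ᵥ M.mulVec (k i)) := by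
      simp only [Finset.mul_sum, mul_assoc]
    have h6 : ∑ i, ∑ j, b i * a i j * (k j ⬝ᵥ M.mulVec (k i))
        = ∑ i, ∑ j, b j * a j i * (k j ⬝ᵥ M.mulVec (k i)) := by
      rw [Finset.sum_comm]
      refine Finset.sum_congr rfl fun i _ => Finset.sum_congr rfl fun j _ => ?_
      rw [hB]
    rw [h5, two_mul]
    nth_rewrite 2 [h6]
    rw [← Finset.sum_add_distrib]
    refine Finset.sum_congr rfl fun i _ => ?_
    rw [← Finset.sum_add_distrib, sum_dotProduct, Finset.mul_sum]
    refine Finset.sum_congr rfl fun j _ => ?_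
    rw [← add_mul, hsymplectic, smul_dotProduct, smul_eq_mul, mul_assoc]
  have h7 : ∑ i, b i * (z ⬝ᵥ M.mulVec (k i))
      + τ * ∑ i, b i * ∑ j, a i j * (k j ⬝ᵥ M.mulVec (k i)) = 0 := by
    rw [Finset.mul_sum, ← Finset.sum_add_distrib]
    refine Finset.sum_eq_zero fun i _ => ?_
    linear_combination b i * h1 i
  rw [← h3 z] at h7
  rw [hzp]
  simp only [mulVec_add, mulVec_smul, add_dotProduct, dotProduct_add, smul_dotProduct,
    dotProduct_smul, smul_eq_mul]
  rw [h4, hB (∑ i, b i • k i) z]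
  linear_combination 2 * τ * h7
end
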